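/- Let k, m be positive integers. For every i with 1 ≤ i ≤ k, one has x_i^{m+k} = 0 in R(k,m), while x_i^{m+k−1} ≠ 0 in R(k,m). (Thus every generator x_i has height exactly m+k−1.) -/

import Mathlib

/-!
Write `h_d(l)` for `completeHomog l d` and say that a list `l` of ring elements vanishes above `m`
when `h_d(l) = 0` for all `d > m`. By the recursion `h_{d+1}(x, l) = h_{d+1}(l) + x h_d(x, l)`, the
list `(x, l)` vanishes above `m` if and only if `l` vanishes above `m + 1` and
`h_{m+1}(x, l) = 0`. Applied along the prefixes of `(x_1, …, x_k)`, this shows that the defining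
relations of `R(k,m)` say exactly that `(x_1, …, x_k)` vanishes above `m`. As `h_d` is symmetric,
because `∑ h_d(l) T^d` is the product of the geometric series of the elements of `l`, all elements
but `x_j` can be removed, so `(x_j)` vanishes above `m + k - 1`, i.e. `x_j^(m+k) = 0`.

For the nonvanishing, over any nontrivial coefficient ring, start from the empty list and adjoin
elements one at a time: if `l` vanishes above `m + 1`, then `h_{m+1}(X, l)` is monic of degree
`m + 1` in `X`, so adjoining a root `x` of it is an injective extension in which `x^m ≠ 0` and
`(x, l)` vanishes above `m`. Adjoining `k` elements, the first one `t` satisfies `t^(m+k-1) ≠ 0`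
and the resulting list vanishes above `m`. By symmetry `t` may be placed at position `j`, and then
`x_j ↦ t` extends to a ring homomorphism on `R(k,m)`.
-/

open scoped TensorProduct

/-- Complete homogeneous symmetric polynomial of degree `d` in a list of elements
of a commutative (semi)ring: `h_d(l)`. -/
noncomputable def completeHomog {R : Type*} [CommSemiring R] : List R → ℕ → R
  | [], 0 => 1
  | [], _ + 1 => 0
  | x :: l, d => ∑ t ∈ Finset.range (d + 1), x ^ t * completeHomog l (d - t)

/-- Elementary symmetric polynomial of degree `d` in a list of elements: `e_d(l)`. -/
noncomputable def elemSymm {R : Type*} [CommSemiring R] : List R → ℕ → R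
  | _, 0 => 1
  | [], _ + 1 => 0
  | x :: l, d + 1 => elemSymm l (d + 1) + x * elemSymm l d

/-- The ideal of `(ZMod 2)[x_1, …, x_k]` generated by the complete homogeneous
symmetric polynomials `h_{m+i}(x_1, …, x_{k+1-i})` for `1 ≤ i ≤ k`. -/
noncomputable def flagIdeal (k m : ℕ) : Ideal (MvPolynomial (Fin k) (ZMod 2)) :=
  Ideal.span { p | ∃ i : ℕ, 1 ≤ i ∧ i ≤ k ∧
    p = completeHomog (((List.finRange k).take (k + 1 - i)).map MvPolynomial.X) (m + i) }

/-- `R(k,m)`, the quotient of `(ZMod 2)[x_1, …, x_k]` by `flagIdeal k m`;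
this is the mod-2 cohomology ring of the real flag manifold `F(1^k, m)`. -/
abbrev FlagRing (k m : ℕ) : Type :=
  MvPolynomial (Fin k) (ZMod 2) ⧸ flagIdeal k m

/-- The image of the variable `x_{j+1}` in `R(k,m)` (`j` is 0-indexed). -/
noncomputable def xGen (k m : ℕ) (j : Fin k) : FlagRing k m :=
  Ideal.Quotient.mk (flagIdeal k m) (MvPolynomial.X j)

/-- The zero-divisor `z_{j+1} = x_{j+1} ⊗ 1 + 1 ⊗ x_{j+1}` in `R(k,m) ⊗ R(k,m)`. -/
noncomputable def zGen (k m : ℕ) (j : Fin k) :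
    FlagRing k m ⊗[ZMod 2] FlagRing k m :=
  xGen k m j ⊗ₜ 1 + 1 ⊗ₜ xGen k m j

/-- `x_{i+1,j+1}` in the `s`-fold tensor power `R(k,m)^{⊗ s}`: the element having
`x_{j+1}` in the `(i+1)`-st tensor factor and `1` elsewhere (`i`, `j` 0-indexed). -/
noncomputable def xT (k m s : ℕ) (i : Fin s) (j : Fin k) :
    ⨂[ZMod 2] _ : Fin s, FlagRing k m :=
  PiTensorProduct.tprod (ZMod 2) (fun t => if t = i then xGen k m j else 1)

/-- The `s`-th zero-divisor `z_{i+1,j+1} = x_{1,j+1} + x_{i+1,j+1}` in `R(k,m)^{⊗ s}`. -/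
noncomputable def zT (k m s : ℕ) (hs : 0 < s) (i : Fin s) (j : Fin k) :
    ⨂[ZMod 2] _ : Fin s, FlagRing k m :=
  xT k m s ⟨0, hs⟩ j + xT k m s i j

section CommSemiring

variable {R S : Type*} [CommSemiring R] [CommSemiring S]

theorem completeHomog_zero (l : List R) : completeHomog l 0 = 1 := by
  induction l with
  | nil => rw [completeHomog]
  | cons x l ih => simp [completeHomog, ih]

theorem completeHomog_cons_succ (x : R) (l : List R) (d : ℕ) :
    completeHomog (x :: l) (d + 1) = completeHomog l (d + 1) + x * completeHomog (x :: l) d := by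
  rw [completeHomog, completeHomog, Finset.sum_range_succ', Finset.mul_sum, add_comm]
  simp only [pow_zero, one_mul, Nat.sub_zero, Nat.add_sub_add_right, pow_succ', mul_assoc]

theorem completeHomog_singleton (x : R) (d : ℕ) : completeHomog [x] d = x ^ d := by
  induction d with
  | zero => rw [completeHomog_zero, pow_zero]
  | succ d ih => rw [completeHomog_cons_succ, completeHomog, ih, zero_add, pow_succ']

theorem completeHomog_map (f : R →+* S) (l : List R) (d : ℕ) :
    completeHomog (l.map f) d = f (completeHomog l d) := by
  induction l generalizing d with
  | nil => cases d <;> simp [completeHomog]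
  | cons x l ih => simp [completeHomog, ih]

theorem powerSeries_mk_completeHomog (l : List R) :
    PowerSeries.mk (completeHomog l) = (l.map fun x ↦ PowerSeries.mk (x ^ ·)).prod := by
  induction l with
  | nil =>
    ext (_ | d)
    · simp [completeHomog]
    · simp [completeHomog, PowerSeries.coeff_one]
  | cons x l ih =>
    ext d
    rw [List.map_cons, List.prod_cons, ← ih, PowerSeries.coeff_mul, PowerSeries.coeff_mk,
      completeHomog]
    simp only [PowerSeries.coeff_mk]
    exact (Finset.Nat.sum_antidiagonal_eq_sum_range_succ
      (fun i j ↦ x ^ i * completeHomog l j) d).symm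

theorem completeHomog_eq_of_perm {l l' : List R} (h : l.Perm l') :
    completeHomog l = completeHomog l' := by
  have hmk : PowerSeries.mk (completeHomog l) = PowerSeries.mk (completeHomog l') := by
    simpa only [powerSeries_mk_completeHomog] using (h.map _).prod_eq
  funext d
  simpa only [PowerSeries.coeff_mk] using congrArg (PowerSeries.coeff d) hmk

/-- A list `l` vanishes above `m` if `h_d(l) = 0` for all `d > m`. For `l = (x_1, …, x_k)` this
is equivalent to the `k` relations defining `R(k,m)`, see `vanishesAbove_iff_forall_take`. -/
def VanishesAbove (l : List R) (m : ℕ) : Prop :=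
  ∀ d, m < d → completeHomog l d = 0

theorem vanishesAbove_nil (m : ℕ) : VanishesAbove ([] : List R) m := by
  rintro (_ | d) hd
  · omega
  · rw [completeHomog]

theorem vanishesAbove_congr_perm {l l' : List R} (h : l.Perm l') (m : ℕ) :
    VanishesAbove l m ↔ VanishesAbove l' m := by
  rw [VanishesAbove, completeHomog_eq_of_perm h, VanishesAbove]

theorem vanishesAbove_cons_iff {x : R} {l : List R} {m : ℕ} :
    VanishesAbove (x :: l) m ↔
      VanishesAbove l (m + 1) ∧ completeHomog (x :: l) (m + 1) = 0 := by
  refine ⟨fun h ↦ ⟨?_, h _ m.lt_succ_self⟩, fun ⟨hl, hx⟩ d hd ↦ ?_⟩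
  · rintro (_ | d) hd
    · omega
    · simpa [h (d + 1) (by omega), h d (by omega)] using (completeHomog_cons_succ x l d).symm
  · induction d, hd using Nat.le_induction with
    | base => exact hx
    | succ d hd ih => rw [completeHomog_cons_succ, ih, hl (d + 1) (by omega), mul_zero, add_zero]

theorem vanishesAbove_iff_forall_take {l : List R} {m : ℕ} :
    VanishesAbove l m ↔
      ∀ i, 1 ≤ i → i ≤ l.length → completeHomog (l.take (l.length + 1 - i)) (m + i) = 0 := by
  induction l using List.reverseRecOn generalizing m with
  | nil =>
    exact iff_of_true (vanishesAbove_nil m)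
      fun i hi hil ↦ absurd (hi.trans hil) (Nat.not_succ_le_zero 0)
  | append_singleton l x ih =>
    have hperm : (l ++ [x]).Perm (x :: l) := List.perm_append_comm
    have take_all : (l ++ [x]).take ((l ++ [x]).length + 1 - 1) = l ++ [x] := by
      rw [Nat.add_sub_cancel, List.take_length]
    have take_succ (i : ℕ) (hi : 1 ≤ i) :
        (l ++ [x]).take ((l ++ [x]).length + 1 - (i + 1)) = l.take (l.length + 1 - i) := by
      rw [List.length_append, List.length_singleton, Nat.add_sub_add_right,
        List.take_append_of_le_length (by omega)]
    rw [vanishesAbove_congr_perm hperm, vanishesAbove_cons_iff, ih,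
      ← completeHomog_eq_of_perm hperm]
    constructor
    · rintro ⟨hl, hx⟩ (_ | _ | i) hi hil
      · omega
      · rwa [take_all]
      · rw [take_succ (i + 1) (by omega)]
        simpa [add_assoc, add_comm 1] using hl (i + 1) (by omega) (by simpa using hil)
    · refine fun h ↦ ⟨fun i hi hil ↦ ?_, take_all ▸ h 1 le_rfl (by simp)⟩
      rw [← take_succ i hi, add_assoc, add_comm 1]
      exact h (i + 1) (by omega) (by simpa using hil)

theorem VanishesAbove.map {l : List R} {m : ℕ} (h : VanishesAbove l m) (f : R →+* S) :
    VanishesAbove (l.map f) m := fun d hd ↦ by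
  rw [completeHomog_map, h d hd, map_zero]

theorem VanishesAbove.of_append {l₁ l₂ : List R} {m : ℕ} (h : VanishesAbove (l₁ ++ l₂) m) :
    VanishesAbove l₂ (m + l₁.length) := by
  induction l₁ generalizing m with
  | nil => exact h
  | cons x l ih =>
    rw [List.length_cons, add_comm l.length, ← add_assoc]
    exact ih (vanishesAbove_cons_iff.1 h).1

theorem VanishesAbove.pow_eq_zero {x : R} {l : List R} {m : ℕ} (h : VanishesAbove l m)
    (hx : x ∈ l) : x ^ (m + l.length) = 0 := by
  obtain ⟨l₁, l₂, rfl⟩ := List.append_of_mem hx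
  have hperm : (l₁ ++ x :: l₂).Perm ((l₁ ++ l₂) ++ [x]) :=
    List.perm_middle.trans (List.perm_append_comm (l₁ := [x]))
  have hsingle : VanishesAbove [x] (m + (l₁ ++ l₂).length) :=
    ((vanishesAbove_congr_perm hperm m).1 h).of_append
  rw [← completeHomog_singleton]
  exact hsingle _ (by simp only [List.length_append, List.length_cons]; omega)

end CommSemiring

section Extension

open Polynomial

universe u

variable {A : Type u} [CommRing A] [Nontrivial A]

theorem isMonicOfDegree_completeHomog_X_cons (l : List A) (d : ℕ) :
    IsMonicOfDegree (completeHomog ((X : A[X]) :: l.map C) d) d := by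
  induction d with
  | zero => rw [completeHomog_zero, isMonicOfDegree_zero_iff]
  | succ d ih =>
    rw [completeHomog_cons_succ, completeHomog_map, add_comm d]
    exact ((isMonicOfDegree_X A).mul ih).add_left (by rw [natDegree_C]; omega)

theorem VanishesAbove.exists_extension_cons {l : List A} {m : ℕ} (h : VanishesAbove l (m + 1)) :
    ∃ (B : Type u) (_ : CommRing B) (f : A →+* B) (x : B),
      Function.Injective f ∧ VanishesAbove (x :: l.map f) m ∧ x ^ m ≠ 0 := by
  set p := completeHomog ((X : A[X]) :: l.map C) (m + 1) with hp
  obtain ⟨hdeg, hmonic⟩ := isMonicOfDegree_completeHomog_X_cons l (m + 1)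
  refine ⟨AdjoinRoot p, inferInstance, AdjoinRoot.of p, AdjoinRoot.root p, ?_, ?_, ?_⟩
  · rw [injective_iff_map_eq_zero]
    intro a
    contrapose!
    intro ha
    exact AdjoinRoot.mk_ne_zero_of_natDegree_lt hmonic (C_ne_zero.2 ha)
      (by rw [natDegree_C, hdeg]; omega)
  · have hmap : AdjoinRoot.root p :: l.map (AdjoinRoot.of p)
        = ((X : A[X]) :: l.map C).map (AdjoinRoot.mk p) := by
      simp [Function.comp_def]
    refine vanishesAbove_cons_iff.2 ⟨h.map _, ?_⟩
    rw [hmap, completeHomog_map, ← hp, AdjoinRoot.mk_self]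
  · rw [← AdjoinRoot.mk_X, ← map_pow]
    exact AdjoinRoot.mk_ne_zero_of_natDegree_lt hmonic (monic_X_pow m).ne_zero
      (by rw [natDegree_X_pow, hdeg]; omega)

theorem VanishesAbove.exists_extension_append {l : List A} {m : ℕ} (r : ℕ)
    (h : VanishesAbove l (m + r)) :
    ∃ (B : Type u) (_ : CommRing B) (f : A →+* B) (l' : List B),
      Function.Injective f ∧ l'.length = r ∧ VanishesAbove (l' ++ l.map f) m := by
  induction r generalizing m with
  | zero => exact ⟨A, inferInstance, RingHom.id A, [], Function.injective_id, rfl, by simpa using h⟩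
  | succ r ih =>
    obtain ⟨B, _, f, l', hf, hlen, hl'⟩ := ih (m := m + 1) (by rwa [add_right_comm, add_assoc])
    have : Nontrivial B := hf.nontrivial
    obtain ⟨B', _, g, x, hg, hx, -⟩ := hl'.exists_extension_cons
    exact ⟨B', inferInstance, g.comp f, x :: l'.map g, hg.comp hf, by simp [hlen],
      by simpa using hx⟩

variable (A) in
theorem exists_vanishesAbove_cons_pow_ne_zero (m n : ℕ) :
    ∃ (B : Type u) (_ : CommRing B) (_ : A →+* B) (t : B) (l : List B),
      l.length = n ∧ VanishesAbove (t :: l) m ∧ t ^ (m + n) ≠ 0 := by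
  obtain ⟨B, _, f, t, hf, ht, htpow⟩ :=
    (vanishesAbove_nil (R := A) (m + n + 1)).exists_extension_cons
  have : Nontrivial B := hf.nontrivial
  obtain ⟨B', _, g, l, hg, hlen, hl⟩ := ht.exists_extension_append n
  refine ⟨B', inferInstance, g.comp f, g t, l, hlen, ?_, ?_⟩
  · exact (vanishesAbove_congr_perm List.perm_append_comm m).1 hl
  · rwa [← map_pow, map_ne_zero_iff g hg]

end Extension

theorem exists_ofFn_perm_of_mem {α : Type*} {l : List α} {a : α} (ha : a ∈ l)
    (j : Fin l.length) : ∃ y : Fin l.length → α, y j = a ∧ (List.ofFn y).Perm l := by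
  obtain ⟨i, rfl⟩ := List.get_of_mem ha
  exact ⟨l.get ∘ Equiv.swap j i, by simp,
    by simpa using Equiv.Perm.ofFn_comp_perm (Equiv.swap j i) l.get⟩

section Ideal

open MvPolynomial

/-- The ideal `flagIdeal k m` with `ZMod 2` replaced by an arbitrary coefficient ring `S`. -/
noncomputable def completeHomogIdeal (S : Type*) [CommSemiring S] (k m : ℕ) :
    Ideal (MvPolynomial (Fin k) S) :=
  Ideal.span { p | ∃ i : ℕ, 1 ≤ i ∧ i ≤ k ∧
    p = completeHomog (((List.finRange k).take (k + 1 - i)).map X) (m + i) }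

theorem completeHomogIdeal_le_ker_iff {S B : Type*} [CommSemiring S] [CommSemiring B] {k m : ℕ}
    (φ : MvPolynomial (Fin k) S →+* B) :
    completeHomogIdeal S k m ≤ RingHom.ker φ ↔
      VanishesAbove (List.ofFn fun j ↦ φ (X j)) m := by
  have map_generator (i : ℕ) :
      φ (completeHomog (((List.finRange k).take (k + 1 - i)).map X) (m + i)) =
        completeHomog ((List.ofFn fun j ↦ φ (X j)).take (k + 1 - i)) (m + i) := by
    rw [← completeHomog_map, List.map_map, List.map_take, List.ofFn_eq_map, Function.comp_def]
  simp only [completeHomogIdeal, Ideal.span_le, vanishesAbove_iff_forall_take, List.length_ofFn,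
    ← map_generator]
  constructor
  · exact fun h i hi hik ↦ h ⟨i, hi, hik, rfl⟩
  · rintro h _ ⟨i, hi, hik, rfl⟩
    exact h i hi hik

variable (S : Type*) [CommRing S] {k : ℕ} (m : ℕ) (j : Fin k)

theorem X_pow_mem_completeHomogIdeal :
    (X j : MvPolynomial (Fin k) S) ^ (m + k) ∈ completeHomogIdeal S k m := by
  set π := Ideal.Quotient.mk (completeHomogIdeal S k m)
  have hvanish : VanishesAbove (List.ofFn fun i ↦ π (X i)) m :=
    (completeHomogIdeal_le_ker_iff π).1 Ideal.mk_ker.ge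
  have hpow : π (X j) ^ (m + k) = 0 := by
    simpa using hvanish.pow_eq_zero (List.mem_ofFn.2 ⟨j, rfl⟩)
  rwa [← Ideal.Quotient.eq_zero_iff_mem, map_pow]

theorem X_pow_notMem_completeHomogIdeal [Nontrivial S] :
    (X j : MvPolynomial (Fin k) S) ^ (m + k - 1) ∉ completeHomogIdeal S k m := by
  obtain _ | n := k
  · exact j.elim0
  obtain ⟨B, _, f, t, l, rfl, hvanish, htpow⟩ := exists_vanishesAbove_cons_pow_ne_zero S m n
  obtain ⟨y, hyj, hperm⟩ := exists_ofFn_perm_of_mem (l := t :: l) List.mem_cons_self j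
  have hker : completeHomogIdeal S (l.length + 1) m ≤ RingHom.ker (eval₂Hom f y) := by
    rw [completeHomogIdeal_le_ker_iff]
    simpa using (vanishesAbove_congr_perm hperm m).2 hvanish
  intro hmem
  apply htpow
  simpa [hyj] using hker hmem

end Ideal

theorem statement3_general (S : Type*) [CommRing S] [Nontrivial S] {k : ℕ} (m : ℕ) (j : Fin k) :
    (MvPolynomial.X j : MvPolynomial (Fin k) S) ^ (m + k) ∈ completeHomogIdeal S k m ∧
      (MvPolynomial.X j : MvPolynomial (Fin k) S) ^ (m + k - 1) ∉ completeHomogIdeal S k m :=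
  ⟨X_pow_mem_completeHomogIdeal S m j, X_pow_notMem_completeHomogIdeal S m j⟩

/-- each generator `x_i` of `R(k,m)` satisfies `x_i^{m+k} = 0` and
`x_i^{m+k-1} ≠ 0`, i.e. has height exactly `m + k - 1`. -/
theorem statement3 (k m : ℕ) (hk : 0 < k) (hm : 0 < m) :
    ∀ j : Fin k, xGen k m j ^ (m + k) = 0 ∧ xGen k m j ^ (m + k - 1) ≠ 0 := by
  intro j
  simp only [xGen, ← map_pow, ne_eq, Ideal.Quotient.eq_zero_iff_mem]
  exact statement3_general (ZMod 2) m j
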